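/- arXiv:2404.06696 — 4 statements merged into one kernel-verified Lean document; each statement's English description precedes it below -/
import Mathlib

section
/- Let θ ∈ ℝ, θ ≠ 0, A ∈ ℝ^{d×d}, B ∈ ℝ^{d×m}, C ∈ ℝ^{k×d}, σ ∈ ℝ^{d×n}, and let R ∈ ℝ^{m×m} be symmetric positive definite. Let P : [0,T] → ℝ^{d×d} be differentiable with P_t invertible for every t ∈ [0,T], and suppose P satisfies the risk-sensitive backward differential Riccati equation −(d/dt)P_t = AᵀP_t + P_tA + CᵀC − P_t (B R⁻¹ Bᵀ − θ σσᵀ) P_t. Then S_t := (|θ| P_t)⁻¹ is differentiable and satisfies (d/dt)S_t = A S_t + S_t Aᵀ + |θ| S_t CᵀC S_t − (1/|θ|)(B R⁻¹ Bᵀ − θ σσᵀ) for all t ∈ [0,T]. -/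
open Matrix

section MatrixCalculus

attribute [local instance] Matrix.linftyOpNormedRing Matrix.linftyOpNormedAlgebra

/-- Entrywise derivative of the inverse of a differentiable curve of invertible matrices. -/
theorem hasDerivAt_matrix_inv_apply {ι : Type*} [Fintype ι] [DecidableEq ι]
    {M : ℝ → Matrix ι ι ℝ} {M' : Matrix ι ι ℝ} {t : ℝ}
    (hM : ∀ i j, HasDerivAt (fun s => M s i j) (M' i j) t) (hdet : IsUnit (M t).det) (i j : ι) :
    HasDerivAt (fun s => (M s)⁻¹ i j) ((-((M t)⁻¹ * M' * (M t)⁻¹)) i j) t := by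
  have hcurve : HasDerivAt M M' t := by
    have hsum : HasDerivAt (fun s => ∑ a, ∑ b, M s a b • Matrix.single a b (1 : ℝ))
        (∑ a, ∑ b, M' a b • Matrix.single a b (1 : ℝ)) t :=
      HasDerivAt.fun_sum fun a _ => HasDerivAt.fun_sum fun b _ => (hM a b).smul_const _
    simpa [Matrix.smul_single, ← Matrix.matrix_eq_sum_single] using hsum
  obtain ⟨u, hu⟩ := (Matrix.isUnit_iff_isUnit_det _).2 hdet
  have hinv := hasFDerivAt_ringInverse (𝕜 := ℝ) u
  rw [hu] at hinv
  have hcomp := (Matrix.entryLinearMap ℝ ℝ i j).toContinuousLinearMap.hasFDerivAt.comp_hasDerivAt t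
    (hinv.comp_hasDerivAt t hcurve)
  simp only [Function.comp_def, ← Matrix.nonsing_inv_eq_ringInverse] at hcomp
  have hval : ((Matrix.entryLinearMap ℝ ℝ i j).toContinuousLinearMap
      ((-ContinuousLinearMap.mulLeftRight ℝ (Matrix ι ι ℝ) ↑u⁻¹ ↑u⁻¹) M'))
      = (-((M t)⁻¹ * M' * (M t)⁻¹)) i j := by
    rw [Matrix.coe_units_inv, hu]
    rfl
  exact hval ▸ hcomp

end MatrixCalculus

/-- if `P` solves the risk-sensitive backward differential Riccati equation
and is invertible, then `S = (|θ| P)⁻¹` is differentiable and solves the dual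
differential Riccati equation. -/
theorem leqg_dual_riccati
    (d m k n : ℕ) (T : ℝ) (hT : 0 < T)
    (θ : ℝ) (hθ : θ ≠ 0)
    (A : Matrix (Fin d) (Fin d) ℝ) (B : Matrix (Fin d) (Fin m) ℝ)
    (C : Matrix (Fin k) (Fin d) ℝ) (σ : Matrix (Fin d) (Fin n) ℝ)
    (R : Matrix (Fin m) (Fin m) ℝ) (hR : R.PosDef)
    (P P' : ℝ → Matrix (Fin d) (Fin d) ℝ)
    (hP : ∀ t ∈ Set.Icc (0 : ℝ) T, ∀ i j, HasDerivAt (fun s => P s i j) (P' t i j) t)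
    (hPinv : ∀ t ∈ Set.Icc (0 : ℝ) T, IsUnit (P t).det)
    (hric : ∀ t ∈ Set.Icc (0 : ℝ) T,
      -P' t = Aᵀ * P t + P t * A + Cᵀ * C
        - P t * (B * R⁻¹ * Bᵀ - θ • (σ * σᵀ)) * P t) :
    ∀ t ∈ Set.Icc (0 : ℝ) T, ∀ i j,
      HasDerivAt (fun s => (|θ| • P s)⁻¹ i j)
        ((A * (|θ| • P t)⁻¹ + (|θ| • P t)⁻¹ * Aᵀ
          + |θ| • ((|θ| • P t)⁻¹ * (Cᵀ * C) * (|θ| • P t)⁻¹)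
          - |θ|⁻¹ • (B * R⁻¹ * Bᵀ - θ • (σ * σᵀ))) i j) t := by
  intro t ht i j
  have hc : |θ| ≠ 0 := abs_ne_zero.2 hθ
  have hdet := hPinv t ht
  have hinv : (|θ| • P t)⁻¹ = |θ|⁻¹ • (P t)⁻¹ := by
    exact Matrix.inv_smul' (P t) (Units.mk0 |θ| hc) hdet
  have hderiv := hasDerivAt_matrix_inv_apply (M := fun s => |θ| • P s) (M' := |θ| • P' t)
    (fun a b => (hP t ht a b).const_mul |θ|)
    (by rw [Matrix.det_smul]; exact (hc.isUnit.pow _).mul hdet) i j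
  convert hderiv using 1
  refine congrFun (congrFun ?_ i) j
  have hleft := Matrix.nonsing_inv_mul (P t) hdet
  have hright := Matrix.mul_nonsing_inv (P t) hdet
  have hconj : -((P t)⁻¹ * P' t * (P t)⁻¹) = (P t)⁻¹ * Aᵀ + A * (P t)⁻¹
      + (P t)⁻¹ * (Cᵀ * C) * (P t)⁻¹ - (B * R⁻¹ * Bᵀ - θ • (σ * σᵀ)) := by
    rw [← Matrix.neg_mul, ← Matrix.mul_neg, hric t ht]
    generalize B * R⁻¹ * Bᵀ - θ • (σ * σᵀ) = Q
    generalize Cᵀ * C = K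
    have hcancel (X : Matrix (Fin d) (Fin d) ℝ) : (P t)⁻¹ * (P t * X) = X := by
      rw [← Matrix.mul_assoc, hleft, Matrix.one_mul]
    simp only [Matrix.mul_add, Matrix.add_mul, Matrix.mul_sub, Matrix.sub_mul, Matrix.mul_assoc,
      hcancel, hright, Matrix.mul_one]
  have hscale : -((|θ| • P t)⁻¹ * (|θ| • P' t) * (|θ| • P t)⁻¹)
      = |θ|⁻¹ • -((P t)⁻¹ * P' t * (P t)⁻¹) := by
    simp [hinv, smul_smul, hc]
  rw [hscale, hconj, hinv]
  simp only [Matrix.smul_mul, Matrix.mul_smul, smul_smul, smul_add, smul_sub, mul_inv_cancel₀ hc,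
    ← mul_assoc, one_mul]
  abel
end

section
/- Let S ∈ ℝ^{d×d} be symmetric positive definite, n ∈ ℝ^d, C ∈ ℝ^{k×d}, and λ > 0. Let ρ : ℝ^d → (0,∞) be the Gaussian density ρ(z) = (2π)^{−d/2} (det S)^{−1/2} exp(−½ (z−n)ᵀ S⁻¹ (z−n)). Define the vector field I(z) := (λ/2) S CᵀC (z + n), the function h(z) := (λ/2)|Cz|², and the constant ĥ := (λ/2) tr(CᵀC (S + n nᵀ)). Then for every z ∈ ℝ^d, −∇·(ρ I)(z) = ρ(z) (h(z) − ĥ). -/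
open Matrix

/-- Partial derivative in direction `i`. -/
noncomputable def pd {d : ℕ} (i : Fin d) (f : (Fin d → ℝ) → ℝ) (x : Fin d → ℝ) : ℝ :=
  fderiv ℝ f x (Pi.single i 1)

/-- Spatial gradient. -/
noncomputable def grad {d : ℕ} (f : (Fin d → ℝ) → ℝ) (x : Fin d → ℝ) : Fin d → ℝ :=
  fun i => pd i f x

/-- Spatial Hessian as a matrix. -/
noncomputable def hess {d : ℕ} (f : (Fin d → ℝ) → ℝ) (x : Fin d → ℝ) :
    Matrix (Fin d) (Fin d) ℝ :=
  Matrix.of fun i j => pd i (fun y => pd j f y) x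

/-- Divergence of a vector field. -/
noncomputable def dvg {d : ℕ} (v : (Fin d → ℝ) → (Fin d → ℝ)) (x : Fin d → ℝ) : ℝ :=
  ∑ i, pd i (fun y => v y i) x

/-- Derivative of an affine map `y ↦ A (y + n)`, read in coordinate `i`. -/
theorem hasFDerivAt_mulVec_add_apply {d m : ℕ} (A : Matrix (Fin m) (Fin d) ℝ) (n z : Fin d → ℝ)
    (i : Fin m) :
    HasFDerivAt (fun y => A.mulVec (y + n) i)
      ((ContinuousLinearMap.proj i).comp A.mulVecLin.toContinuousLinearMap) z :=
  HasFDerivAt.comp (g := fun w => A.mulVec w i) z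
    ((ContinuousLinearMap.proj (R := ℝ) (φ := fun _ : Fin m => ℝ) i).comp
      A.mulVecLin.toContinuousLinearMap).hasFDerivAt ((hasFDerivAt_id z).add_const n)

/-- The quadratic form `y ↦ (y - n)ᵀ P (y - n)` of a symmetric matrix is differentiable, with
derivative `v ↦ 2 vᵀ P (z - n)`. -/
theorem exists_hasFDerivAt_quadratic {d : ℕ} {P : Matrix (Fin d) (Fin d) ℝ} (hP : P.IsSymm)
    (n z : Fin d → ℝ) :
    ∃ L : (Fin d → ℝ) →L[ℝ] ℝ,
      HasFDerivAt (fun y => (y - n) ⬝ᵥ P.mulVec (y - n)) L z ∧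
        ∀ v, L v = 2 * (v ⬝ᵥ P.mulVec (z - n)) := by
  have hsum := HasFDerivAt.fun_sum (u := Finset.univ) fun i _ =>
    (hasFDerivAt_mulVec_add_apply (1 : Matrix (Fin d) (Fin d) ℝ) (-n) z i).mul
      (hasFDerivAt_mulVec_add_apply P (-n) z i)
  refine ⟨_, by simpa [dotProduct, sub_eq_add_neg] using hsum, fun v => ?_⟩
  have hsymm : (z - n) ⬝ᵥ P.mulVec v = v ⬝ᵥ P.mulVec (z - n) := by
    rw [dotProduct_mulVec, ← mulVec_transpose, hP.eq, dotProduct_comm]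
  rw [two_mul]
  nth_rewrite 1 [← hsymm]
  simp [dotProduct, Finset.sum_add_distrib, sub_eq_add_neg, mul_comm]

/-- The gradient of an unnormalised Gaussian with symmetric precision matrix. -/
theorem exists_hasFDerivAt_gaussian {d : ℕ} {P : Matrix (Fin d) (Fin d) ℝ} (hP : P.IsSymm)
    (c : ℝ) (n z : Fin d → ℝ) :
    ∃ L : (Fin d → ℝ) →L[ℝ] ℝ,
      HasFDerivAt (fun y => c * Real.exp (-(1 / 2) * ((y - n) ⬝ᵥ P.mulVec (y - n)))) L z ∧
        ∀ v, L v = -(c * Real.exp (-(1 / 2) * ((z - n) ⬝ᵥ P.mulVec (z - n)))) *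
          (v ⬝ᵥ P.mulVec (z - n)) := by
  obtain ⟨L, hL, hLv⟩ := exists_hasFDerivAt_quadratic hP n z
  refine ⟨_, (hL.const_mul (-(1 / 2))).exp.const_mul c, fun v => ?_⟩
  simp only [_root_.smul_apply, smul_eq_mul, hLv]
  ring

/-- Divergence of a scalar function times an affine vector field. -/
theorem dvg_smul_affine {d : ℕ} {f : (Fin d → ℝ) → ℝ} {L : (Fin d → ℝ) →L[ℝ] ℝ}
    {z : Fin d → ℝ} (hf : HasFDerivAt f L z) (A : Matrix (Fin d) (Fin d) ℝ) (n : Fin d → ℝ) :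
    dvg (fun y => f y • A.mulVec (y + n)) z = f z * A.trace + L (A.mulVec (z + n)) := by
  have hpd : ∀ i, pd i (fun y => (f y • A.mulVec (y + n)) i) z =
      f z * A i i + A.mulVec (z + n) i * L (Pi.single i 1) := fun i => by
    have := hf.fun_mul (hasFDerivAt_mulVec_add_apply A n z i)
    simp only [pd, Pi.smul_apply, smul_eq_mul]
    rw [HasFDerivAt.fderiv this]
    simp
  have hL : L (A.mulVec (z + n)) = ∑ i, A.mulVec (z + n) i * L (Pi.single i 1) := by
    conv_lhs => rw [pi_eq_sum_univ' (A.mulVec (z + n))]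
    simp [map_sum]
  simp only [dvg, hpd, Finset.sum_add_distrib, hL, trace, diag, Finset.mul_sum]

/-- the interaction vector field `I(z) = (λ/2) S CᵀC (z+n)` solves the
Poisson equation `−∇·(ρ I) = ρ (h − ĥ)` for the Gaussian density `ρ = N(n, S)`. -/
theorem gaussian_poisson_interaction
    (d k : ℕ)
    (S : Matrix (Fin d) (Fin d) ℝ) (hS : S.PosDef)
    (n : Fin d → ℝ) (C : Matrix (Fin k) (Fin d) ℝ)
    (lam : ℝ) (hlam : 0 < lam)
    (ρ : (Fin d → ℝ) → ℝ)
    (hρ : ∀ z, ρ z =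
      (2 * Real.pi) ^ (-(d : ℝ) / 2) * S.det ^ (-(1 : ℝ) / 2) *
        Real.exp (-(1 / 2) * ((z - n) ⬝ᵥ S⁻¹.mulVec (z - n))))
    (I : (Fin d → ℝ) → (Fin d → ℝ))
    (hI : ∀ z, I z = (lam / 2) • ((S * (Cᵀ * C)).mulVec (z + n)))
    (h : (Fin d → ℝ) → ℝ)
    (hh : ∀ z, h z = (lam / 2) * (∑ j, (C.mulVec z j) ^ 2))
    (hhat : ℝ)
    (hhat_def : hhat = (lam / 2) * ((Cᵀ * C) * (S + Matrix.vecMulVec n n)).trace) :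
    ∀ z, -(dvg (fun y => ρ y • I y) z) = ρ z * (h z - hhat) := by
  intro z
  have hsymm : S.IsSymm := by simpa using hS.isHermitian
  have hdet : IsUnit S.det := hS.det_pos.ne'.isUnit
  have hP : (S⁻¹).IsSymm := by rw [IsSymm, transpose_nonsing_inv, hsymm.eq]
  obtain ⟨L, hL, hLv⟩ := exists_hasFDerivAt_gaussian hP
    ((2 * Real.pi) ^ (-(d : ℝ) / 2) * S.det ^ (-(1 : ℝ) / 2)) n z
  simp only [← hρ] at hL hLv
  have hI' : ∀ y, I y = ((lam / 2) • (S * (Cᵀ * C))).mulVec (y + n) := fun y => by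
    rw [hI, smul_mulVec]
  have hquad : ((S * (Cᵀ * C)).mulVec (z + n)) ⬝ᵥ S⁻¹.mulVec (z - n) =
      C.mulVec z ⬝ᵥ C.mulVec z - C.mulVec n ⬝ᵥ C.mulVec n := by
    have hcancel : S⁻¹.mulVec ((S * (Cᵀ * C)).mulVec (z + n)) =
        Cᵀ.mulVec (C.mulVec (z + n)) := by
      rw [mulVec_mulVec, nonsing_inv_mul_cancel_left _ _ hdet, mulVec_mulVec]
    rw [dotProduct_mulVec, ← mulVec_transpose, hP.eq, hcancel, mulVec_transpose,
      ← dotProduct_mulVec, mulVec_add, mulVec_sub, add_dotProduct, dotProduct_sub,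
      dotProduct_sub, dotProduct_comm (C.mulVec n) (C.mulVec z)]
    ring
  have htrace : ((Cᵀ * C) * (S + vecMulVec n n)).trace =
      (S * (Cᵀ * C)).trace + C.mulVec n ⬝ᵥ C.mulVec n := by
    rw [mul_add, trace_add, trace_mul_comm _ S, mul_vecMulVec, trace_vecMulVec,
      ← mulVec_mulVec, mulVec_transpose, ← dotProduct_mulVec]
  have hnorm : ∑ j, (C.mulVec z j) ^ 2 = C.mulVec z ⬝ᵥ C.mulVec z := by
    simp [dotProduct, sq]
  simp only [hI']
  rw [dvg_smul_affine hL, hLv, smul_mulVec, smul_dotProduct, hquad, trace_smul, hh, hhat_def,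
    htrace, hnorm, smul_eq_mul, smul_eq_mul]
  ring
end

section
/- Let S ∈ ℝ^{d×d} be symmetric positive definite, n ∈ ℝ^d, Σ ∈ ℝ^{d×d} symmetric, and λ ∈ ℝ. Let ρ : ℝ^d → (0,∞) be the Gaussian density ρ(z) = (2π)^{−d/2} (det S)^{−1/2} exp(−½ (z−n)ᵀ S⁻¹ (z−n)). Define the vector field C(z) := (λ/2) Σ S⁻¹ (z − n). Then for every z ∈ ℝ^d, −∇·(ρ C)(z) = (λ/2) tr(Σ ∇²ρ(z)), where ∇²ρ(z) = ρ(z)(S⁻¹(z−n)(z−n)ᵀS⁻¹ − S⁻¹) is the Hessian of ρ. -/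
open Matrix

theorem differentiable_mulVec_sub_apply {d : ℕ} (A : Matrix (Fin d) (Fin d) ℝ) (n : Fin d → ℝ)
    (j : Fin d) : Differentiable ℝ fun z : Fin d → ℝ => (A *ᵥ (z - n)) j := by
  simp only [mulVec, dotProduct, Pi.sub_apply]
  fun_prop

theorem differentiable_quadraticForm {d : ℕ} (A : Matrix (Fin d) (Fin d) ℝ) (n : Fin d → ℝ) :
    Differentiable ℝ fun z : Fin d → ℝ => (z - n) ⬝ᵥ A *ᵥ (z - n) := by
  simp only [mulVec, dotProduct, Pi.sub_apply]
  fun_prop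

theorem pd_quadraticForm {d : ℕ} {A : Matrix (Fin d) (Fin d) ℝ} (hA : A.IsSymm)
    (n : Fin d → ℝ) (j : Fin d) (z : Fin d → ℝ) :
    pd j (fun y => (y - n) ⬝ᵥ A *ᵥ (y - n)) z = 2 * (A *ᵥ (z - n)) j := by
  rw [pd, ← (differentiable_quadraticForm A n z).lineDeriv_eq_fderiv]
  have hline : ∀ t : ℝ, (z + t • Pi.single j 1 - n) ⬝ᵥ A *ᵥ (z + t • Pi.single j 1 - n) =
      (z - n) ⬝ᵥ A *ᵥ (z - n) + t * (2 * (A *ᵥ (z - n)) j) + t ^ 2 * A j j := by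
    intro t
    have hcross : (z - n) ⬝ᵥ A *ᵥ Pi.single j 1 = (A *ᵥ (z - n)) j := by
      rw [dotProduct_mulVec, ← mulVec_transpose, hA.eq, dotProduct_single_one]
    rw [add_sub_right_comm, mulVec_add, mulVec_smul, add_dotProduct, dotProduct_add,
      dotProduct_add, smul_dotProduct, smul_dotProduct, dotProduct_smul, dotProduct_smul, hcross,
      single_one_dotProduct, single_one_dotProduct, mulVec_single_one]
    simp only [smul_eq_mul, col_apply]
    ring
  simp only [lineDeriv, hline]
  have h := (((hasDerivAt_id (0 : ℝ)).mul_const (2 * (A *ᵥ (z - n)) j)).const_add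
    ((z - n) ⬝ᵥ A *ᵥ (z - n))).fun_add (((hasDerivAt_id (0 : ℝ)).pow 2).mul_const (A j j))
  simpa using h.deriv

theorem pd_gaussian {d : ℕ} {A : Matrix (Fin d) (Fin d) ℝ} (hA : A.IsSymm) (n : Fin d → ℝ)
    (c : ℝ) (j : Fin d) (z : Fin d → ℝ) :
    pd j (fun y => c * Real.exp (-(1 / 2) * ((y - n) ⬝ᵥ A *ᵥ (y - n)))) z =
      -(c * Real.exp (-(1 / 2) * ((z - n) ⬝ᵥ A *ᵥ (z - n))) * (A *ᵥ (z - n)) j) := by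
  have h := (((differentiable_quadraticForm A n z).hasFDerivAt.const_mul
    (-(1 / 2))).exp).const_mul c
  have hq := pd_quadraticForm hA n j z
  rw [pd] at hq ⊢
  rw [h.fderiv]
  simp only [_root_.smul_apply, smul_eq_mul, hq]
  ring

/-- The divergence of the field `M ∇f` is `tr(M ∇²f)` for a constant symmetric matrix `M`. -/
theorem dvg_mulVec_grad {d : ℕ} {M : Matrix (Fin d) (Fin d) ℝ} (hM : M.IsSymm)
    {f : (Fin d → ℝ) → ℝ} {z : Fin d → ℝ}
    (hf : ∀ j, DifferentiableAt ℝ (fun y => pd j f y) z) :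
    dvg (fun y => M *ᵥ grad f y) z = (M * hess f z).trace := by
  have hrow : ∀ i, pd i (fun y => (M *ᵥ grad f y) i) z = ∑ j, M i j * hess f z i j := by
    intro i
    have h : HasFDerivAt (fun y => (M *ᵥ grad f y) i)
        (∑ j, M i j • fderiv ℝ (fun y => pd j f y) z) z :=
      HasFDerivAt.fun_sum (u := Finset.univ) fun j _ => (hf j).hasFDerivAt.const_mul (M i j)
    rw [pd, h.fderiv]
    simp [hess, pd]
  simp only [dvg, hrow, trace, diag_apply, mul_apply]
  rw [Finset.sum_comm]
  exact Finset.sum_congr rfl fun j _ => Finset.sum_congr rfl fun i _ => by rw [hM.apply]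

/-- the correction vector field `C(z) = (λ/2) Σ S⁻¹ (z−n)` satisfies
`−∇·(ρ C) = (λ/2) tr(Σ ∇²ρ)` for the Gaussian density `ρ = N(n, S)`. -/
theorem gaussian_poisson_correction
    (d : ℕ)
    (S : Matrix (Fin d) (Fin d) ℝ) (hS : S.PosDef)
    (n : Fin d → ℝ)
    (Sig : Matrix (Fin d) (Fin d) ℝ) (hSig : Sig.IsSymm)
    (lam : ℝ)
    (ρ : (Fin d → ℝ) → ℝ)
    (hρ : ∀ z, ρ z =
      (2 * Real.pi) ^ (-(d : ℝ) / 2) * S.det ^ (-(1 : ℝ) / 2) *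
        Real.exp (-(1 / 2) * ((z - n) ⬝ᵥ S⁻¹.mulVec (z - n))))
    (Cf : (Fin d → ℝ) → (Fin d → ℝ))
    (hC : ∀ z, Cf z = (lam / 2) • ((Sig * S⁻¹).mulVec (z - n))) :
    ∀ z, -(dvg (fun y => ρ y • Cf y) z) = (lam / 2) * (Sig * hess ρ z).trace := by
  intro z
  have hA : S⁻¹.IsSymm := by
    simpa [IsSymm, IsHermitian, conjTranspose_eq_transpose_of_trivial] using hS.isHermitian.inv
  have hgrad : ∀ j y, pd j ρ y = -(ρ y * (S⁻¹ *ᵥ (y - n)) j) := by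
    intro j y
    rw [funext hρ]
    exact pd_gaussian hA n _ j y
  have hρd : Differentiable ℝ ρ := by
    rw [funext hρ]
    exact ((differentiable_quadraticForm S⁻¹ n).const_mul _).exp.const_mul _
  have hfield : (fun y => ρ y • Cf y) = fun y => (-(lam / 2) • Sig) *ᵥ grad ρ y := by
    funext y
    have hg : grad ρ y = -(ρ y • S⁻¹ *ᵥ (y - n)) := by
      funext j
      simp [grad, hgrad]
    rw [hg, hC, ← mulVec_mulVec, mulVec_neg, mulVec_smul, smul_mulVec, neg_smul, smul_neg,
      neg_neg, smul_comm]
  rw [hfield, dvg_mulVec_grad (hSig.smul _), smul_mul, trace_smul, smul_eq_mul, neg_mul, neg_neg]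
  intro j
  simp only [hgrad]
  exact ((hρd z).mul (differentiable_mulVec_sub_apply S⁻¹ n j z)).neg
end

section
/- Let A ∈ ℝ^{d×d}, B ∈ ℝ^{d×m}, C ∈ ℝ^{k×d}, σ ∈ ℝ^{d×n}, and let R ∈ ℝ^{m×m} be symmetric positive definite. Let S : [0,T] → ℝ^{d×d} be a continuously differentiable symmetric-positive-definite-matrix-valued function satisfying (d/dt)S_t = A S_t + S_t Aᵀ + S_t CᵀC S_t − B R⁻¹ Bᵀ. Let ρ(t,z) := (2π)^{−d/2} (det S_t)^{−1/2} exp(−½ zᵀ S_t⁻¹ z) be the density of N(0, S_t). Then for all t ∈ [0,T] and z ∈ ℝ^d, ∂ρ/∂t (t,z) = −∇_z·( ρ(t,·) ( A(·) + ½ S_t CᵀC (·) + ½ σσᵀ S_t⁻¹ (·) ) )(z) − ½ tr( (B R⁻¹ Bᵀ + σσᵀ) ∇_z²ρ(t,z) ), where A(·), ½S_tCᵀC(·), ½σσᵀS_t⁻¹(·) denote the linear vector fields z ↦ Az, z ↦ ½S_tCᵀCz, z ↦ ½σσᵀS_t⁻¹z. -/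
open Matrix

namespace Matrix

variable {ι : Type*} [Fintype ι] [DecidableEq ι]

/-- Jacobi's formula for the derivative of a determinant. -/
theorem hasDerivAt_det {M : ℝ → Matrix ι ι ℝ} {M' : Matrix ι ι ℝ} {t : ℝ}
    (hM : ∀ i j, HasDerivAt (fun s => M s i j) (M' i j) t) :
    HasDerivAt (fun s => (M s).det) ((M t).adjugate * M').trace t := by
  let detCont : ContinuousMultilinearMap ℝ (fun _ : ι => ι → ℝ) ℝ :=
    { toMultilinearMap := (detRowAlternating : (ι → ℝ) [⋀^ι]→ₗ[ℝ] ℝ).toMultilinearMap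
      cont := Continuous.matrix_det (A := fun M : Matrix ι ι ℝ => M) continuous_id }
  have hrows : HasDerivAt (F := ι → ι → ℝ) (fun s => M s) M' t :=
    hasDerivAt_pi.2 fun i => hasDerivAt_pi.2 (hM i)
  refine ((detCont.hasFDerivAt (M t)).comp_hasDerivAt t hrows).congr_deriv ?_
  refine (detCont.linearDeriv_apply (M t) M').trans ?_
  rw [trace_mul_comm]
  refine Finset.sum_congr rfl fun i _ => ?_
  have hrow : ((M t).updateRow i (M' i)).det = ((M t)ᵀ.adjugate *ᵥ M' i) i := by
    rw [← cramer_transpose_apply, cramer_eq_adjugate_mulVec]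
  refine hrow.trans ?_
  simp [← adjugate_transpose, mulVec, dotProduct, diag_apply, mul_apply, mul_comm]

open scoped Matrix.Norms.Operator in
/-- Derivative of a bilinear form whose matrix is the inverse of a differentiable family. -/
theorem hasDerivAt_dotProduct_inv_mulVec {M : ℝ → Matrix ι ι ℝ} {M' : Matrix ι ι ℝ} {t : ℝ}
    (hM : ∀ i j, HasDerivAt (fun s => M s i j) (M' i j) t) (hu : IsUnit (M t)) (x y : ι → ℝ) :
    HasDerivAt (fun s => x ⬝ᵥ (M s)⁻¹ *ᵥ y) (-(x ⬝ᵥ ((M t)⁻¹ * M' * (M t)⁻¹) *ᵥ y)) t := by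
  have hmat : HasDerivAt M M' t := by
    have hsum : HasDerivAt (fun s => ∑ i, ∑ j, M s i j • single i j (1 : ℝ))
        (∑ i, ∑ j, M' i j • single i j (1 : ℝ)) t :=
      HasDerivAt.fun_sum fun i _ => HasDerivAt.fun_sum fun j _ => (hM i j).smul_const _
    have hdecomp (N : Matrix ι ι ℝ) : ∑ i, ∑ j, N i j • single i j (1 : ℝ) = N := by
      simpa [smul_single] using (matrix_eq_sum_single N).symm
    simpa only [hdecomp] using hsum
  obtain ⟨u, hu⟩ := hu
  have hinv : HasDerivAt (fun s => (M s)⁻¹) (-((M t)⁻¹ * M' * (M t)⁻¹)) t := by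
    have h := hasFDerivAt_ringInverse (𝕜 := ℝ) u
    rw [hu] at h
    simp only [nonsing_inv_eq_ringInverse]
    refine (h.comp_hasDerivAt t hmat).congr_deriv ?_
    simp [← hu]
  let form : Matrix ι ι ℝ →ₗ[ℝ] ℝ :=
    { toFun := fun N => x ⬝ᵥ N *ᵥ y
      map_add' := fun N N' => by simp [add_mulVec, dotProduct_add]
      map_smul' := fun c N => by simp [smul_mulVec, dotProduct_smul] }
  refine ((LinearMap.toContinuousLinearMap form).hasFDerivAt.comp_hasDerivAt t hinv).congr_deriv ?_
  change x ⬝ᵥ (-((M t)⁻¹ * M' * (M t)⁻¹)) *ᵥ y = _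
  rw [neg_mulVec, dotProduct_neg]

end Matrix

section Gaussian

variable {d : ℕ} {P : Matrix (Fin d) (Fin d) ℝ} {f : (Fin d → ℝ) → ℝ} {c : ℝ}

theorem hasFDerivAt_mulVec_apply (L : Matrix (Fin d) (Fin d) ℝ) (j : Fin d) (z : Fin d → ℝ) :
    HasFDerivAt (fun y => (L *ᵥ y) j)
      ((ContinuousLinearMap.proj j).comp (LinearMap.toContinuousLinearMap L.mulVecLin)) z :=
  ContinuousLinearMap.hasFDerivAt
    ((ContinuousLinearMap.proj j).comp (LinearMap.toContinuousLinearMap L.mulVecLin))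

theorem hasFDerivAt_gaussian (hP : P.IsSymm)
    (hf : ∀ y, f y = c * Real.exp (-(1 / 2) * (y ⬝ᵥ P *ᵥ y))) (z : Fin d → ℝ) :
    HasFDerivAt f (-(f z) • ∑ i, (P *ᵥ z) i •
      (ContinuousLinearMap.proj i : (Fin d → ℝ) →L[ℝ] ℝ)) z := by
  have hquad : HasFDerivAt (fun y : Fin d → ℝ => y ⬝ᵥ P *ᵥ y) _ z :=
    HasFDerivAt.fun_sum fun i _ => (hasFDerivAt_apply i z).mul (hasFDerivAt_mulVec_apply P i z)
  have hexp := ((hquad.const_mul (-(1 / 2) : ℝ)).exp).const_mul c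
  rw [funext hf]
  refine hexp.congr_fderiv ?_
  ext v
  have hsymm : z ⬝ᵥ P *ᵥ v = (P *ᵥ z) ⬝ᵥ v := by
    rw [dotProduct_mulVec, ← mulVec_transpose, hP.eq]
  have hsum : ∑ i, (z i * (P *ᵥ v) i + (P *ᵥ z) i * v i) = 2 * ∑ i, (P *ᵥ z) i * v i := by
    rw [Finset.sum_add_distrib, two_mul]
    exact congrArg (· + _) hsymm
  simp [hsum]
  ring

theorem pd_gaussian_s14 (hP : P.IsSymm)
    (hf : ∀ y, f y = c * Real.exp (-(1 / 2) * (y ⬝ᵥ P *ᵥ y))) (i : Fin d) (z : Fin d → ℝ) :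
    pd i f z = -(f z * (P *ᵥ z) i) := by
  rw [pd, (hasFDerivAt_gaussian hP hf z).fderiv]
  simp [Pi.single_apply]

theorem pd_gaussian_mul_mulVec (hP : P.IsSymm)
    (hf : ∀ y, f y = c * Real.exp (-(1 / 2) * (y ⬝ᵥ P *ᵥ y)))
    (L : Matrix (Fin d) (Fin d) ℝ) (i j : Fin d) (z : Fin d → ℝ) :
    pd i (fun y => f y * (L *ᵥ y) j) z = f z * (L j i - (P *ᵥ z) i * (L *ᵥ z) j) := by
  rw [pd, ((hasFDerivAt_gaussian hP hf z).fun_mul (hasFDerivAt_mulVec_apply L j z)).fderiv]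
  simp [Pi.single_apply]
  ring

theorem dvg_gaussian_smul_mulVec (hP : P.IsSymm)
    (hf : ∀ y, f y = c * Real.exp (-(1 / 2) * (y ⬝ᵥ P *ᵥ y)))
    (L : Matrix (Fin d) (Fin d) ℝ) (z : Fin d → ℝ) :
    dvg (fun y => f y • L *ᵥ y) z = f z * (L.trace - z ⬝ᵥ (P * L) *ᵥ z) := by
  have hform : z ⬝ᵥ (P * L) *ᵥ z = (P *ᵥ z) ⬝ᵥ (L *ᵥ z) := by
    rw [← mulVec_mulVec, dotProduct_mulVec, ← mulVec_transpose, hP.eq]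
  simp only [dvg, Pi.smul_apply, smul_eq_mul, pd_gaussian_mul_mulVec hP hf]
  rw [hform, ← Finset.mul_sum, Finset.sum_sub_distrib]
  rfl

theorem hess_gaussian (hP : P.IsSymm)
    (hf : ∀ y, f y = c * Real.exp (-(1 / 2) * (y ⬝ᵥ P *ᵥ y))) (z : Fin d → ℝ) :
    hess f z = f z • (vecMulVec (P *ᵥ z) (P *ᵥ z) - P) := by
  ext i j
  have hgrad : (fun y => pd j f y) = fun y => f y * ((-P) *ᵥ y) j := by
    funext y
    simp [pd_gaussian_s14 hP hf, neg_mulVec]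
  simp only [hess, of_apply, hgrad, pd_gaussian_mul_mulVec hP hf]
  simp only [neg_mulVec, Matrix.neg_apply, Pi.neg_apply, Matrix.smul_apply, Matrix.sub_apply,
    vecMulVec_apply, smul_eq_mul, hP.apply i j]
  ring

theorem trace_mul_hess_gaussian (hP : P.IsSymm)
    (hf : ∀ y, f y = c * Real.exp (-(1 / 2) * (y ⬝ᵥ P *ᵥ y)))
    (K : Matrix (Fin d) (Fin d) ℝ) (z : Fin d → ℝ) :
    (K * hess f z).trace = f z * (z ⬝ᵥ (P * K * P) *ᵥ z - (K * P).trace) := by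
  have hform : z ⬝ᵥ (P * K * P) *ᵥ z = (P *ᵥ z) ⬝ᵥ (K *ᵥ (P *ᵥ z)) := by
    rw [← mulVec_mulVec, ← mulVec_mulVec, dotProduct_mulVec, ← mulVec_transpose, hP.eq]
  rw [hess_gaussian hP hf, hform, Matrix.mul_smul, trace_smul, Matrix.mul_sub, trace_sub, mul_vecMulVec,
    trace_vecMulVec, dotProduct_comm, smul_eq_mul]

end Gaussian

/-- Time derivative of a centred Gaussian density with differentiable covariance. -/
theorem hasDerivAt_gaussian_covariance {ι : Type*} [Fintype ι] [DecidableEq ι]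
    {S : ℝ → Matrix ι ι ℝ} {S' : Matrix ι ι ℝ} {t : ℝ}
    (hS : ∀ i j, HasDerivAt (fun s => S s i j) (S' i j) t) (hdet : 0 < (S t).det)
    (c : ℝ) (z : ι → ℝ) :
    HasDerivAt (fun s => c * (S s).det ^ (-(1 : ℝ) / 2) *
        Real.exp (-(1 / 2) * (z ⬝ᵥ (S s)⁻¹ *ᵥ z)))
      (c * (S t).det ^ (-(1 : ℝ) / 2) * Real.exp (-(1 / 2) * (z ⬝ᵥ (S t)⁻¹ *ᵥ z)) *
        ((1 / 2) * (z ⬝ᵥ ((S t)⁻¹ * S' * (S t)⁻¹) *ᵥ z - ((S t)⁻¹ * S').trace))) t := by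
  have hunit : IsUnit (S t) := (isUnit_iff_isUnit_det _).2 hdet.ne'.isUnit
  have hpow := (((hasDerivAt_det hS).rpow_const (p := -(1 : ℝ) / 2) (.inl hdet.ne')).const_mul c)
  have hexp := (((hasDerivAt_dotProduct_inv_mulVec hS hunit z z).const_mul (-(1 / 2) : ℝ)).exp)
  refine (hpow.mul hexp).congr_deriv ?_
  have hadj : ((S t).adjugate * S').trace = (S t).det * ((S t)⁻¹ * S').trace := by
    rw [inv_def, smul_mul, trace_smul, smul_eq_mul, Ring.inverse_eq_inv',
      mul_inv_cancel_left₀ hdet.ne']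
  rw [hadj, Real.rpow_sub_one hdet.ne']
  field_simp
  ring

/-- Fokker-Planck equation of the dual-EnKF mean-field process in the LQG
case: the Gaussian density `ρ(t,·) = N(0, S_t)` driven by the dual Riccati equation
satisfies the stated PDE with drift `Az`, interaction `½ S_t CᵀC z` and correction
`½ σσᵀ S_t⁻¹ z`. -/
theorem lqg_mean_field_fokker_planck
    (d m k n : ℕ) (T : ℝ) (hT : 0 < T)
    (A : Matrix (Fin d) (Fin d) ℝ) (B : Matrix (Fin d) (Fin m) ℝ)
    (C : Matrix (Fin k) (Fin d) ℝ) (σ : Matrix (Fin d) (Fin n) ℝ)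
    (R : Matrix (Fin m) (Fin m) ℝ) (hR : R.PosDef)
    (S S' : ℝ → Matrix (Fin d) (Fin d) ℝ)
    (hSpd : ∀ t ∈ Set.Icc (0 : ℝ) T, (S t).PosDef)
    (hS : ∀ t ∈ Set.Icc (0 : ℝ) T, ∀ i j, HasDerivAt (fun s => S s i j) (S' t i j) t)
    (hS'cont : ∀ i j, ContinuousOn (fun t => S' t i j) (Set.Icc (0 : ℝ) T))
    (hric : ∀ t ∈ Set.Icc (0 : ℝ) T,
      S' t = A * S t + S t * Aᵀ + S t * (Cᵀ * C) * S t - B * R⁻¹ * Bᵀ)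
    (ρ : ℝ → (Fin d → ℝ) → ℝ)
    (hρ : ∀ t z, ρ t z =
      (2 * Real.pi) ^ (-(d : ℝ) / 2) * (S t).det ^ (-(1 : ℝ) / 2) *
        Real.exp (-(1 / 2) * (z ⬝ᵥ (S t)⁻¹.mulVec z))) :
    ∀ t ∈ Set.Icc (0 : ℝ) T, ∀ z,
      deriv (fun s => ρ s z) t =
        -(dvg (fun y => ρ t y •
            (A.mulVec y + (1 / 2 : ℝ) • ((S t * (Cᵀ * C)).mulVec y)
              + (1 / 2 : ℝ) • ((σ * σᵀ * (S t)⁻¹).mulVec y))) z)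
        - (1 / 2) * ((B * R⁻¹ * Bᵀ + σ * σᵀ) * hess (ρ t) z).trace := by
  intro t ht z
  have hpd := hSpd t ht
  have hdet : 0 < (S t).det := hpd.det_pos
  have hunit : IsUnit (S t).det := hdet.ne'.isUnit
  have hSsymm : (S t)ᵀ = S t := by simpa using hpd.isHermitian.eq
  have hP : (S t)⁻¹.IsSymm := by rw [IsSymm, transpose_nonsing_inv, hSsymm]
  have hfield (y : Fin d → ℝ) :
      A.mulVec y + (1 / 2 : ℝ) • ((S t * (Cᵀ * C)).mulVec y)
        + (1 / 2 : ℝ) • ((σ * σᵀ * (S t)⁻¹).mulVec y) =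
      (A + (1 / 2 : ℝ) • (S t * (Cᵀ * C)) + (1 / 2 : ℝ) • (σ * σᵀ * (S t)⁻¹)) *ᵥ y := by
    simp only [add_mulVec, smul_mulVec]
  simp only [hfield]
  rw [dvg_gaussian_smul_mulVec hP (hρ t), trace_mul_hess_gaussian hP (hρ t)]
  have hderiv := hasDerivAt_gaussian_covariance (hS t ht) hdet ((2 * Real.pi) ^ (-(d : ℝ) / 2)) z
  simp only [← hρ] at hderiv
  rw [hderiv.deriv, hric t ht]
  set Q := B * R⁻¹ * Bᵀ
  set P := (S t)⁻¹
  have hPS : P * S t = 1 := nonsing_inv_mul _ hunit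
  have hSP : S t * P = 1 := mul_nonsing_inv _ hunit
  have htrace : (P * (A * S t + S t * Aᵀ + S t * (Cᵀ * C) * S t - Q)).trace =
      2 * A.trace + (S t * (Cᵀ * C)).trace - (Q * P).trace := by
    have h₁ : (P * (A * S t)).trace = A.trace := by
      rw [trace_mul_comm, Matrix.mul_assoc, hSP, Matrix.mul_one]
    have h₂ : P * (S t * Aᵀ) = Aᵀ := by rw [← Matrix.mul_assoc, hPS, Matrix.one_mul]
    have h₃ : P * (S t * (Cᵀ * C) * S t) = Cᵀ * C * S t := by
      rw [Matrix.mul_assoc (S t), ← Matrix.mul_assoc P, hPS, Matrix.one_mul]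
    rw [Matrix.mul_sub, Matrix.mul_add, Matrix.mul_add, trace_sub, trace_add, trace_add, h₁, h₂,
      h₃, trace_transpose, trace_mul_comm (Cᵀ * C), trace_mul_comm P Q]
    ring
  have hmat : P * (A * S t + S t * Aᵀ + S t * (Cᵀ * C) * S t - Q) * P =
      P * A + Aᵀ * P + Cᵀ * C - P * Q * P := by
    have h₁ : P * (A * S t) * P = P * A := by
      rw [Matrix.mul_assoc, Matrix.mul_assoc, hSP, Matrix.mul_one]
    have h₂ : P * (S t * Aᵀ) * P = Aᵀ * P := by
      rw [← Matrix.mul_assoc P, hPS, Matrix.one_mul]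
    have h₃ : P * (S t * (Cᵀ * C) * S t) * P = Cᵀ * C := by
      rw [Matrix.mul_assoc (S t), ← Matrix.mul_assoc P, hPS, Matrix.one_mul, Matrix.mul_assoc,
        hSP, Matrix.mul_one]
    simp only [Matrix.mul_sub, Matrix.mul_add, Matrix.sub_mul, Matrix.add_mul, h₁, h₂, h₃]
  have hcross : z ⬝ᵥ (Aᵀ * P) *ᵥ z = z ⬝ᵥ (P * A) *ᵥ z := by
    rw [dotProduct_mulVec, ← mulVec_transpose, transpose_mul, transpose_transpose, hP.eq,
      dotProduct_comm]
  have hPSC : P * (S t * (Cᵀ * C)) = Cᵀ * C := by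
    rw [← Matrix.mul_assoc, hPS, Matrix.one_mul]
  rw [htrace, hmat]
  simp only [Matrix.mul_add, Matrix.add_mul, Matrix.mul_smul, hPSC, trace_add, trace_smul,
    add_mulVec, sub_mulVec, smul_mulVec, dotProduct_add, dotProduct_sub, dotProduct_smul,
    smul_eq_mul, hcross, ← Matrix.mul_assoc P (σ * σᵀ) P]
  ring
end
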